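/- Let n, p ∈ ℕ. There exists a polynomial P ∈ ℝ[X₁,…,X_p] of degree 4p with positive coefficients (one may take P(X₁,…,X_p) = 5^p (1 + 4(Σ_{j=1}^p X_j)^4)^p) such that for every k ∈ ℤⁿ and every l = (l₁,…,l_p) ∈ (ℤⁿ)^p satisfying k ≠ 0 and k ≠ −l̂_i for all 1 ≤ i ≤ p, one has 1/(|k+l̂₁|² ⋯ |k+l̂_p|²) ≤ P(|l₁|,…,|l_p|) / |k|^{2p}. -/

import Mathlib

noncomputable section

/-- Euclidean norm of an integer vector `k ∈ ℤⁿ`. -/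
def znorm {n : ℕ} (k : Fin n → ℤ) : ℝ := Real.sqrt (∑ i, ((k i : ℝ)) ^ 2)

/-- Partial sums `l̂ᵢ = l₁ + ⋯ + lᵢ` of a tuple `l ∈ (ℤⁿ)^p`. -/
def lhat {p n : ℕ} (l : Fin p → Fin n → ℤ) (i : Fin p) : Fin n → ℤ :=
  ∑ j ∈ Finset.Iic i, l j

lemma znorm_eq {n : ℕ} (k : Fin n → ℤ) :
    znorm k = ‖(WithLp.toLp 2 (fun i => (k i : ℝ)) : EuclideanSpace ℝ (Fin n))‖ := by
  simp [znorm, EuclideanSpace.norm_eq]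

lemma znorm_nonneg {n : ℕ} (k : Fin n → ℤ) : 0 ≤ znorm k := Real.sqrt_nonneg _

lemma znorm_add_le {n : ℕ} (a b : Fin n → ℤ) : znorm (a + b) ≤ znorm a + znorm b := by
  rw [znorm_eq, znorm_eq, znorm_eq]
  refine le_trans (le_of_eq ?_) (norm_add_le _ _)
  congr 1
  ext i
  simp

lemma znorm_neg {n : ℕ} (a : Fin n → ℤ) : znorm (-a) = znorm a := by
  simp [znorm]

lemma znorm_sum_le {n : ℕ} {ι : Type*} (s : Finset ι) (f : ι → Fin n → ℤ) :
    znorm (∑ j ∈ s, f j) ≤ ∑ j ∈ s, znorm (f j) := by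
  classical
  induction s using Finset.induction_on with
  | empty => simp [znorm]
  | insert a s ha ih =>
    rw [Finset.sum_insert ha, Finset.sum_insert ha]
    linarith [znorm_add_le (f a) (∑ j ∈ s, f j)]

lemma one_le_znorm {n : ℕ} (a : Fin n → ℤ) (h : a ≠ 0) : 1 ≤ znorm a := by
  obtain ⟨i, hi⟩ := Function.ne_iff.mp h
  rw [znorm, Real.one_le_sqrt]
  have h1 : (1 : ℝ) ≤ (a i : ℝ) ^ 2 := by
    have : 0 < (a i) ^ 2 := by
      have : a i ≠ 0 := hi
      positivity
    exact_mod_cast this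
  exact h1.trans (Finset.single_le_sum (f := fun i => (a i : ℝ) ^ 2)
    (fun j _ => sq_nonneg _) (Finset.mem_univ i))

def NonnegCoeff {p : ℕ} (P : MvPolynomial (Fin p) ℝ) : Prop := ∀ m, 0 ≤ P.coeff m

lemma NonnegCoeff.mul {p : ℕ} {P Q : MvPolynomial (Fin p) ℝ} (hP : NonnegCoeff P)
    (hQ : NonnegCoeff Q) : NonnegCoeff (P * Q) := by
  classical
  intro m
  rw [MvPolynomial.coeff_mul]
  exact Finset.sum_nonneg fun x _ => mul_nonneg (hP _) (hQ _)

lemma NonnegCoeff.add {p : ℕ} {P Q : MvPolynomial (Fin p) ℝ} (hP : NonnegCoeff P)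
    (hQ : NonnegCoeff Q) : NonnegCoeff (P + Q) := by
  intro m
  rw [MvPolynomial.coeff_add]
  exact add_nonneg (hP _) (hQ _)

lemma nonnegCoeff_C {p : ℕ} {c : ℝ} (hc : 0 ≤ c) :
    NonnegCoeff (MvPolynomial.C c : MvPolynomial (Fin p) ℝ) := by
  classical
  intro m
  rw [MvPolynomial.coeff_C]
  split_ifs <;> simp [hc]

lemma NonnegCoeff.pow {p : ℕ} {P : MvPolynomial (Fin p) ℝ} (hP : NonnegCoeff P) (r : ℕ) :
    NonnegCoeff (P ^ r) := by
  induction r with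
  | zero => simpa using nonnegCoeff_C (p := p) zero_le_one
  | succ r ih => rw [pow_succ]; exact ih.mul hP

lemma nonnegCoeff_sum_X {p : ℕ} :
    NonnegCoeff (∑ j, MvPolynomial.X j : MvPolynomial (Fin p) ℝ) := by
  classical
  intro m
  rw [MvPolynomial.coeff_sum]
  refine Finset.sum_nonneg fun j _ => ?_
  rw [MvPolynomial.coeff_X]
  split_ifs <;> simp

lemma totalDegree_pow_eq {p : ℕ} {P : MvPolynomial (Fin p) ℝ} (hP : P ≠ 0) (r : ℕ) :
    (P ^ r).totalDegree = r * P.totalDegree := by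
  induction r with
  | zero => simp
  | succ r ih =>
    rw [pow_succ, MvPolynomial.totalDegree_mul_of_isDomain (pow_ne_zero _ hP) hP, ih]
    ring

lemma totalDegree_C_mul_eq {p : ℕ} {P : MvPolynomial (Fin p) ℝ} (hP : P ≠ 0) {c : ℝ}
    (hc : c ≠ 0) : (MvPolynomial.C c * P).totalDegree = P.totalDegree := by
  rw [MvPolynomial.totalDegree_mul_of_isDomain (by simpa using hc) hP]
  simp

lemma real_key {a s : ℝ} (h3 : 1 ≤ a) : (a + s) ^ 2 ≤ 5 * (1 + 4 * s ^ 4) * a ^ 2 := by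
  have h5 : (1 : ℝ) ≤ a ^ 2 := one_le_pow₀ h3
  have h6 : (0 : ℝ) ≤ (1 + s ^ 4) * (a ^ 2 - 1) := mul_nonneg (by positivity) (by linarith)
  have h7 : (0 : ℝ) ≤ s ^ 4 * a ^ 2 := by positivity
  have h8 := sq_nonneg (a - s)
  have h9 := sq_nonneg (s ^ 2 - 1)
  ring_nf at *
  linarith

/-- **Lemma.** There is a polynomial `P ∈ ℝ[X₁,…,X_p]` of degree `4p` with positive
coefficients (one may take `P = 5^p (1 + 4(X₁+⋯+X_p)^4)^p`) such that for every
`k ∈ ℤⁿ` and `l ∈ (ℤⁿ)^p` with `k ≠ 0` and `k ≠ −l̂ᵢ` for all `i`,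
`1/(|k+l̂₁|² ⋯ |k+l̂_p|²) ≤ P(|l₁|,…,|l_p|)/|k|^{2p}`. -/
theorem inv_prod_norm_bound (n p : ℕ) (hn : 0 < n) (hp : 0 < p) :
    ∃ P : MvPolynomial (Fin p) ℝ,
      P.totalDegree = 4 * p ∧
      (∀ m ∈ P.support, 0 < P.coeff m) ∧
      ∀ (k : Fin n → ℤ) (l : Fin p → Fin n → ℤ),
        k ≠ 0 → (∀ i : Fin p, k ≠ -(lhat l i)) →
        (∏ i : Fin p, znorm (k + lhat l i) ^ 2)⁻¹ ≤
          MvPolynomial.eval (fun j => znorm (l j)) P / znorm k ^ (2 * p) := by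
  classical
  set S : MvPolynomial (Fin p) ℝ := ∑ j, MvPolynomial.X j with hS
  have hS0 : S ≠ 0 := by
    intro h
    have := congrArg (MvPolynomial.eval (fun _ => (1 : ℝ))) h
    simp [hS] at this
    omega
  have hSd : S.totalDegree = 1 :=
    (MvPolynomial.IsHomogeneous.sum _ _ _ fun j _ => MvPolynomial.isHomogeneous_X ℝ j).totalDegree
      hS0
  set Q : MvPolynomial (Fin p) ℝ := MvPolynomial.C 1 + MvPolynomial.C 4 * S ^ 4 with hQ
  have hQd : Q.totalDegree = 4 := by
    have h4 : (MvPolynomial.C 4 * S ^ 4).totalDegree = 4 := by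
      rw [totalDegree_C_mul_eq (pow_ne_zero _ hS0) (by norm_num), totalDegree_pow_eq hS0, hSd]
    rw [hQ, MvPolynomial.totalDegree_add_eq_right_of_totalDegree_lt, h4]
    rw [h4]
    simp
  have hQ0 : Q ≠ 0 := by
    intro h
    rw [h] at hQd
    simp at hQd
  refine ⟨MvPolynomial.C (5 ^ p) * Q ^ p, ?_, ?_, ?_⟩
  · rw [totalDegree_C_mul_eq (pow_ne_zero _ hQ0) (by positivity), totalDegree_pow_eq hQ0, hQd]
    ring
  · intro m hm
    have h : NonnegCoeff (MvPolynomial.C (5 ^ p) * Q ^ p) :=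
      (nonnegCoeff_C (by positivity)).mul
        (((nonnegCoeff_C zero_le_one).add
          ((nonnegCoeff_C (by norm_num)).mul (nonnegCoeff_sum_X.pow 4))).pow p)
    exact lt_of_le_of_ne (h m) (Ne.symm (MvPolynomial.mem_support_iff.mp hm))
  · intro k l hk hl
    have hev : MvPolynomial.eval (fun j => znorm (l j)) (MvPolynomial.C (5 ^ p) * Q ^ p)
        = (5 * (1 + 4 * (∑ j, znorm (l j)) ^ 4)) ^ p := by
      simp [hQ, hS, mul_pow]
    rw [hev]
    set s : ℝ := ∑ j, znorm (l j) with hs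
    have hk1 := one_le_znorm k hk
    have hm1 : ∀ i, 1 ≤ znorm (k + lhat l i) := fun i =>
      one_le_znorm _ fun h => hl i (eq_neg_of_add_eq_zero_left h)
    have hs0 : 0 ≤ s := Finset.sum_nonneg fun j _ => znorm_nonneg _
    have key : ∀ i, znorm k ^ 2 ≤ 5 * (1 + 4 * s ^ 4) * znorm (k + lhat l i) ^ 2 := by
      intro i
      have h1 : znorm (lhat l i) ≤ s := (znorm_sum_le _ _).trans
        (Finset.sum_le_sum_of_subset_of_nonneg (Finset.subset_univ _)
          fun j _ _ => znorm_nonneg _)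
      have h2 : znorm k ≤ znorm (k + lhat l i) + znorm (lhat l i) := by
        have := znorm_add_le (k + lhat l i) (-lhat l i)
        rwa [add_neg_cancel_right, znorm_neg] at this
      have h3 := hm1 i
      set a := znorm (k + lhat l i)
      have h4 : znorm k ^ 2 ≤ (a + s) ^ 2 :=
        pow_le_pow_left₀ (znorm_nonneg _) (by linarith) 2
      exact h4.trans (real_key h3)
    have hprod : znorm k ^ (2 * p) ≤
        (5 * (1 + 4 * s ^ 4)) ^ p * ∏ i : Fin p, znorm (k + lhat l i) ^ 2 := by
      have := Finset.prod_le_prod (s := (Finset.univ : Finset (Fin p)))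
        (fun i _ => sq_nonneg (znorm k)) (fun i _ => key i)
      rw [Finset.prod_mul_distrib] at this
      simpa [pow_mul] using this
    have hpos : 0 < ∏ i : Fin p, znorm (k + lhat l i) ^ 2 :=
      Finset.prod_pos fun i _ => by have := hm1 i; positivity
    rw [inv_eq_one_div, div_le_div_iff₀ hpos (by positivity), one_mul]
    exact hprod

end
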